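/- arXiv:2206.01654 — 4 statements merged into one kernel-verified Lean document; each statement's English description precedes it below -/
import Mathlib

section
/- Suppose (Ω_i, 𝒜_i) = (ℝ, ℬ(ℝ)) for all i = 1,…,n. Let P* ∈ ℙ be such that P*(A) = 1 for some compact set A ⊂ ℝ^n, and let 𝒰 = {Q ∈ ℙ : Q ≪ P* and (π_1,…,π_n) is a Q-martingale}. Then M ∩ 𝒰 ≠ ∅ if and only if Σ_{i=1}^n μ_i(f_i) ≥ inf_{Q ∈ 𝒰} Q(⊕_{i=1}^n f_i) for all bounded Borel functions f_1,…,f_n : ℝ → ℝ (with the convention inf ∅ = ∞). -/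
open MeasureTheory Set ENNReal

namespace FATransport

variable {α : Type*} [MeasurableSpace α]

/-- The collection of measurable sets of `α` (the σ-field `𝒜`), as a type. -/
abbrev MSet (α : Type*) [MeasurableSpace α] := {A : Set α // MeasurableSet A}

/-- A finitely additive probability on the σ-field of `α`, viewed as an element
of `[0,1]^𝒜`: it maps the whole space to `1` and is additive on disjoint pairs. -/
def IsFAP (P : MSet α → unitInterval) : Prop :=
  (P ⟨Set.univ, MeasurableSet.univ⟩ : ℝ) = 1 ∧
    ∀ A B : MSet α, Disjoint A.1 B.1 →
      (P ⟨A.1 ∪ B.1, A.2.union B.2⟩ : ℝ) = (P A : ℝ) + (P B : ℝ)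

/-- `ℙ`, the set of all finitely additive probabilities on `𝒜`, as a subset of
`[0,1]^𝒜` (with its product topology). -/
def FAPs (α : Type*) [MeasurableSpace α] : Set (MSet α → unitInterval) :=
  {P | IsFAP P}

/-- Integral of a simple function with respect to a finitely additive set function. -/
noncomputable def simpleInt (P : MSet α → unitInterval) (s : SimpleFunc α ℝ) : ℝ :=
  ∑ y ∈ s.range, y * (P ⟨(⇑s) ⁻¹' {y}, s.measurableSet_fiber y⟩ : ℝ)

/-- `P(f)` for a bounded measurable `f : α → ℝ`: the supremum of the integrals of
simple functions below `f` (for a f.a.p. `P` and bounded measurable `f` this agrees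
with the integral defined by uniform approximation by simple functions). -/
noncomputable def fapInt (P : MSet α → unitInterval) (f : α → ℝ) : ℝ :=
  sSup (simpleInt P '' {s : SimpleFunc α ℝ | ∀ x, s x ≤ f x})

/-- `P(c) = sup_k P(c ∧ k)` for a `[0,∞]`-valued `c`. -/
noncomputable def fapIntTop (P : MSet α → unitInterval) (c : α → ℝ≥0∞) : ℝ≥0∞ :=
  ⨆ k : ℕ, ENNReal.ofReal (fapInt P (fun x => (c x ⊓ (k : ℝ≥0∞)).toReal))

/-- A real-valued `f` is `P`-integrable iff `P(|f|) < ∞`. -/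
def FapIntegrable (P : MSet α → unitInterval) (f : α → ℝ) : Prop :=
  fapIntTop P (fun x => ENNReal.ofReal |f x|) < ⊤

/-- `P(f) = P(f⁺) - P(f⁻)` for a (`P`-integrable) real-valued `f`. -/
noncomputable def fapIntR (P : MSet α → unitInterval) (f : α → ℝ) : ℝ :=
  (fapIntTop P (fun x => ENNReal.ofReal (f x))).toReal -
    (fapIntTop P (fun x => ENNReal.ofReal (-f x))).toReal

/-- `P ≪ Q` for finitely additive probabilities. -/
def FapAC (P Q : MSet α → unitInterval) : Prop :=
  ∀ A : MSet α, (Q A : ℝ) = 0 → (P A : ℝ) = 0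

variable {n : ℕ} {Ω : Fin n → Type*} [∀ i, MeasurableSpace (Ω i)]

/-- `M`, the set of finitely additive probabilities on `𝒜 = ⊗ᵢ 𝒜ᵢ` whose
`i`-th marginal is `μ i` for every `i`. -/
def couplings (μ : ∀ i, Measure (Ω i)) : Set (MSet (∀ i, Ω i) → unitInterval) :=
  {P | IsFAP P ∧ ∀ (i : Fin n) (B : Set (Ω i)) (hB : MeasurableSet B),
    (P ⟨(fun ω => ω i) ⁻¹' B, (measurable_pi_apply i) hB⟩ : ℝ) = (μ i B).toReal}

end FATransport

namespace FATransport

/-- `(π_1, …, π_n)` is a `P`-martingale for a finitely additive probability `P` on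
`ℬ(ℝⁿ)`: each `P(|π_i|) < ∞`, `P(π_1) = 0`, and `P((π_{i+1} - π_i) g(π_1,…,π_i)) = 0`
for every bounded Borel `g` (encoded as a bounded Borel function on `ℝⁿ` depending
only on the first `i` coordinates). -/
def IsMartFAP {n : ℕ} (hn : 0 < n) (P : MSet (Fin n → ℝ) → unitInterval) : Prop :=
  (∀ i : Fin n, fapIntTop P (fun ω => ENNReal.ofReal |ω i|) < ⊤) ∧
    fapIntR P (fun ω => ω ⟨0, hn⟩) = 0 ∧
    ∀ i j : Fin n, (j : ℕ) = (i : ℕ) + 1 →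
      ∀ g : (Fin n → ℝ) → ℝ, Measurable g → (∃ C, ∀ x, |g x| ≤ C) →
        (∀ x y : Fin n → ℝ, (∀ k : Fin n, k ≤ i → x k = y k) → g x = g y) →
        fapIntR P (fun ω => (ω j - ω i) * g ω) = 0

end FATransport

namespace FATransport

variable {n : ℕ} {Ω : Fin n → Type*} [∀ i, MeasurableSpace (Ω i)]

/-- Condition (4.1) of the paper: `Σᵢ μᵢ(fᵢ) ≥ inf_{Q ∈ 𝒰} Q(⊕ᵢ fᵢ)` for all bounded
measurable `fᵢ : Ωᵢ → ℝ`. The infimum is taken in `EReal`, so that `inf ∅ = ∞` (and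
the condition fails when `𝒰 = ∅`). -/
def DualCond (μ : ∀ i, Measure (Ω i))
    (U : Set (MSet (∀ i, Ω i) → unitInterval)) : Prop :=
  ∀ f : ∀ i, Ω i → ℝ, (∀ i, Measurable (f i)) → (∀ i, ∃ C, ∀ x, |f i x| ≤ C) →
    (⨅ Q ∈ U, ((fapInt Q (fun ω => ∑ i, f i (ω i)) : ℝ) : EReal)) ≤
      ((∑ i, ∫ x, f i x ∂(μ i) : ℝ) : EReal)

end FATransport

namespace FATransport

section helpers
variable {α : Type*} [MeasurableSpace α]

lemma fap_empty {P : MSet α → unitInterval} (hP : IsFAP P) :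
    (P ⟨∅, MeasurableSet.empty⟩ : ℝ) = 0 := by
  have h := hP.2 ⟨∅, MeasurableSet.empty⟩ ⟨∅, MeasurableSet.empty⟩ (by simp)
  simp only [Set.union_self] at h
  linarith

lemma fap_compl {P : MSet α → unitInterval} (hP : IsFAP P) (A : Set α) (hA : MeasurableSet A) :
    (P ⟨A, hA⟩ : ℝ) + (P ⟨Aᶜ, hA.compl⟩ : ℝ) = 1 := by
  have h := hP.2 ⟨A, hA⟩ ⟨Aᶜ, hA.compl⟩ disjoint_compl_right
  simp only [Set.union_compl_self] at h
  rw [← h, hP.1]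

lemma fap_null {P : MSet α → unitInterval} (hP : IsFAP P) {A B : Set α} (hA : MeasurableSet A)
    (hB : MeasurableSet B) (hAB : A ⊆ B) (h0 : (P ⟨B, hB⟩ : ℝ) = 0) : (P ⟨A, hA⟩ : ℝ) = 0 := by
  have h := hP.2 ⟨A, hA⟩ ⟨B \ A, hB.diff hA⟩ disjoint_sdiff_right
  simp only [Set.union_diff_cancel hAB] at h
  have h1 := (P ⟨A, hA⟩).2.1
  have h2 := (P ⟨B \ A, hB.diff hA⟩).2.1
  linarith

open Classical in
noncomputable def TT (P : MSet α → unitInterval) (A : Set α) : ℝ →L[ℝ] ℝ :=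
  if h : MeasurableSet A then (P ⟨A, h⟩ : ℝ) • ContinuousLinearMap.id ℝ ℝ else 0

lemma TT_add {P : MSet α → unitInterval} (hP : IsFAP P) :
    FinMeasAdditive (0 : Measure α) (TT P) := by
  intro A B hA hB _ _ hd
  have h := hP.2 ⟨A, hA⟩ ⟨B, hB⟩ hd
  simp only at h
  simp only [TT, hA, hB, hA.union hB, dif_pos, h, add_smul]

lemma simpleInt_eq (P : MSet α → unitInterval) (s : SimpleFunc α ℝ) :
    simpleInt P s = SimpleFunc.setToSimpleFunc (TT P) s := by
  unfold simpleInt SimpleFunc.setToSimpleFunc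
  refine Finset.sum_congr rfl fun y _ => ?_
  simp [TT, s.measurableSet_fiber y, mul_comm]

lemma int_zero (s : SimpleFunc α ℝ) : Integrable s (0 : Measure α) := integrable_zero_measure

lemma simpleInt_add {P : MSet α → unitInterval} (hP : IsFAP P) (s t : SimpleFunc α ℝ) :
    simpleInt P (s + t) = simpleInt P s + simpleInt P t := by
  simp only [simpleInt_eq]
  exact SimpleFunc.setToSimpleFunc_add _ (TT_add hP) (int_zero s) (int_zero t)

lemma simpleInt_sub {P : MSet α → unitInterval} (hP : IsFAP P) (s t : SimpleFunc α ℝ) :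
    simpleInt P (s - t) = simpleInt P s - simpleInt P t := by
  simp only [simpleInt_eq]
  exact SimpleFunc.setToSimpleFunc_sub _ (TT_add hP) (int_zero s) (int_zero t)

lemma simpleInt_nonneg {P : MSet α → unitInterval} (hP : IsFAP P) {A : Set α}
    (hA : MeasurableSet A) (h0 : (P ⟨Aᶜ, hA.compl⟩ : ℝ) = 0) (s : SimpleFunc α ℝ)
    (hs : ∀ x ∈ A, 0 ≤ s x) : 0 ≤ simpleInt P s := by
  unfold simpleInt
  refine Finset.sum_nonneg fun y _ => ?_
  rcases le_or_gt 0 y with h | h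
  · exact mul_nonneg h (P _).2.1
  · rw [fap_null hP _ hA.compl _ h0]
    · simp
    · intro x hx hxA
      have := hs x hxA
      simp only [Set.mem_preimage, Set.mem_singleton_iff] at hx
      linarith

lemma simpleInt_mono {P : MSet α → unitInterval} (hP : IsFAP P) {A : Set α}
    (hA : MeasurableSet A) (h0 : (P ⟨Aᶜ, hA.compl⟩ : ℝ) = 0) (s t : SimpleFunc α ℝ)
    (hs : ∀ x ∈ A, s x ≤ t x) : simpleInt P s ≤ simpleInt P t := by
  have := simpleInt_nonneg hP hA h0 (t - s) (fun x hx => by simpa using hs x hx)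
  rw [simpleInt_sub hP] at this
  linarith

lemma simpleInt_ite {P : MSet α → unitInterval} (hP : IsFAP P) (B : Set α)
    (hB : MeasurableSet B) (c : ℝ) :
    simpleInt P (SimpleFunc.piecewise B hB (SimpleFunc.const α c) (SimpleFunc.const α 0)) =
      c * (P ⟨B, hB⟩ : ℝ) := by
  have := SimpleFunc.setToSimpleFunc_indicator (TT P)
    (by rw [TT, dif_pos MeasurableSet.empty, fap_empty hP, zero_smul]) hB c
  rw [simpleInt_eq, this]
  simp [TT, hB, mul_comm]

lemma simpleInt_const {P : MSet α → unitInterval} (hP : IsFAP P) (c : ℝ) :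
    simpleInt P (SimpleFunc.const α c) = c := by
  have := simpleInt_ite hP Set.univ MeasurableSet.univ c
  rw [hP.1, mul_one] at this
  rwa [SimpleFunc.piecewise_univ] at this

lemma simpleInt_sum {P : MSet α → unitInterval} (hP : IsFAP P) {ι : Type*} (F : Finset ι)
    (s : ι → SimpleFunc α ℝ) :
    simpleInt P (∑ i ∈ F, s i) = ∑ i ∈ F, simpleInt P (s i) := by
  classical
  induction F using Finset.induction_on with
  | empty => simpa using simpleInt_const hP 0
  | insert a F ha ih => rw [Finset.sum_insert ha, Finset.sum_insert ha, simpleInt_add hP, ih]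

lemma sum_coe {ι : Type*} (F : Finset ι) (s : ι → SimpleFunc α ℝ) (x : α) :
    (∑ i ∈ F, s i) x = ∑ i ∈ F, s i x := by
  classical
  induction F using Finset.induction_on with
  | empty => simp
  | insert a F ha ih =>
    rw [Finset.sum_insert ha, Finset.sum_insert ha, SimpleFunc.coe_add, Pi.add_apply, ih]

/-- upper bound -/
lemma fapInt_le {P : MSet α → unitInterval} (hP : IsFAP P) {A : Set α}
    (hA : MeasurableSet A) (h0 : (P ⟨Aᶜ, hA.compl⟩ : ℝ) = 0) (f : α → ℝ) (s : SimpleFunc α ℝ)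
    (ε m : ℝ) (hm : ∀ x, m ≤ f x) (hs : ∀ x ∈ A, f x ≤ s x + ε) :
    fapInt P f ≤ simpleInt P s + ε := by
  unfold fapInt
  refine csSup_le ⟨_, ⟨SimpleFunc.const α m, by simpa using hm, rfl⟩⟩ ?_
  rintro _ ⟨t, ht, rfl⟩
  have h := simpleInt_mono hP hA h0 t (s + SimpleFunc.const α ε)
    (fun x hx => by simpa using (ht x).trans (hs x hx))
  rwa [simpleInt_add hP, simpleInt_const hP] at h

lemma le_fapInt {P : MSet α → unitInterval} (hP : IsFAP P) {A : Set α}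
    (hA : MeasurableSet A) (h0 : (P ⟨Aᶜ, hA.compl⟩ : ℝ) = 0) (f : α → ℝ) (s : SimpleFunc α ℝ)
    (ε m M : ℝ) (hm : ∀ x, m ≤ f x) (hM : ∀ x, f x ≤ M) (hs : ∀ x ∈ A, s x - ε ≤ f x) :
    simpleInt P s - ε ≤ fapInt P f := by
  unfold fapInt
  let t := SimpleFunc.piecewise A hA (s - SimpleFunc.const α ε) (SimpleFunc.const α m)
  have h : simpleInt P (s - SimpleFunc.const α ε) ≤ simpleInt P t :=
    simpleInt_mono hP hA h0 _ _ (fun x hx => by simp [t, hx])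
  rw [simpleInt_sub hP, simpleInt_const hP] at h
  refine h.trans (le_csSup ⟨M, ?_⟩ ⟨t, ?_, rfl⟩)
  · rintro _ ⟨u, hu, rfl⟩
    have := simpleInt_mono hP hA h0 u (SimpleFunc.const α M)
      (fun x hx => by simpa using (hu x).trans (hM x))
    rwa [simpleInt_const hP] at this
  · intro x
    by_cases hx : x ∈ A
    · simpa [t, hx] using hs x hx
    · simpa [t, hx] using hm x

lemma fapInt_approx {P : MSet α → unitInterval} (hP : IsFAP P) (f : α → ℝ) (s : SimpleFunc α ℝ)
    (ε C : ℝ) (hC : ∀ x, |f x| ≤ C) (hs : ∀ x, |f x - s x| ≤ ε) :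
    |fapInt P f - simpleInt P s| ≤ ε := by
  have h0 : (P ⟨Set.univᶜ, MeasurableSet.univ.compl⟩ : ℝ) = 0 := by
    have := fap_compl hP Set.univ MeasurableSet.univ
    rw [hP.1] at this
    linarith
  have h1 := fapInt_le hP MeasurableSet.univ h0 f s ε (-C) (fun x => (abs_le.1 (hC x)).1)
    (fun x _ => by have := (abs_le.1 (hs x)).2; linarith)
  have h2 := le_fapInt hP MeasurableSet.univ h0 f s ε (-C) C (fun x => (abs_le.1 (hC x)).1)
    (fun x => (abs_le.1 (hC x)).2)
    (fun x _ => by have := (abs_le.1 (hs x)).1; linarith)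
  rw [abs_le]; constructor <;> linarith

lemma trunc_eq (a : ℝ) (k : ℕ) :
    (ENNReal.ofReal a ⊓ (k : ℝ≥0∞)).toReal = min (max a 0) k := by
  have : ENNReal.ofReal a ⊓ (k : ℝ≥0∞) = ENNReal.ofReal (min (max a 0) k) := by
    rw [ENNReal.ofReal_min]
    simp
  rw [this, ENNReal.toReal_ofReal (le_min (le_max_right _ _) (Nat.cast_nonneg _))]

lemma fapIntTop_bounds {P : MSet α → unitInterval} (hP : IsFAP P) {A : Set α}
    (hA : MeasurableSet A) (h0 : (P ⟨Aᶜ, hA.compl⟩ : ℝ) = 0) (h : α → ℝ) (s : SimpleFunc α ℝ)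
    (ε C : ℝ) (hC : ∀ x ∈ A, h x ≤ C) (hs : ∀ x ∈ A, |max (h x) 0 - s x| ≤ ε) :
    fapIntTop P (fun x => ENNReal.ofReal (h x)) ≤ ENNReal.ofReal (simpleInt P s + ε) ∧
    ENNReal.ofReal (simpleInt P s - ε) ≤ fapIntTop P (fun x => ENNReal.ofReal (h x)) := by
  unfold fapIntTop
  simp only [trunc_eq]
  constructor
  · refine iSup_le fun k => ENNReal.ofReal_le_ofReal ?_
    refine fapInt_le hP hA h0 _ s ε 0 (fun x => le_min (le_max_right _ _) (Nat.cast_nonneg _)) ?_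
    intro x hx
    have := (abs_le.1 (hs x hx)).2
    have h2 := min_le_left (max (h x) 0) (k : ℝ)
    linarith
  · obtain ⟨k, hk⟩ := exists_nat_ge C
    refine le_trans (ENNReal.ofReal_le_ofReal ?_)
      (le_iSup (fun k : ℕ => ENNReal.ofReal (fapInt P fun x => min (max (h x) 0) (k : ℝ))) k)
    refine le_fapInt hP hA h0 _ s ε 0 k
      (fun x => le_min (le_max_right _ _) (Nat.cast_nonneg _)) (fun x => min_le_right _ _) ?_
    intro x hx
    have := (abs_le.1 (hs x hx)).1
    rw [min_eq_left (max_le ((hC x hx).trans hk) (Nat.cast_nonneg _))]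
    linarith

lemma fapIntTop_approx {P : MSet α → unitInterval} (hP : IsFAP P) {A : Set α}
    (hA : MeasurableSet A) (h0 : (P ⟨Aᶜ, hA.compl⟩ : ℝ) = 0) (h : α → ℝ) (s : SimpleFunc α ℝ)
    (ε C : ℝ) (hε : 0 ≤ ε) (hC : ∀ x ∈ A, h x ≤ C) (hs : ∀ x ∈ A, |max (h x) 0 - s x| ≤ ε)
    (hpos : ∀ x, 0 ≤ s x) :
    |(fapIntTop P (fun x => ENNReal.ofReal (h x))).toReal - simpleInt P s| ≤ ε := by
  obtain ⟨h1, h2⟩ := fapIntTop_bounds hP hA h0 h s ε C hC hs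
  have h3 := simpleInt_nonneg hP hA h0 s (fun x _ => hpos x)
  have h4 := ENNReal.toReal_mono ENNReal.ofReal_ne_top h1
  rw [ENNReal.toReal_ofReal (by linarith)] at h4
  have h5 := (ENNReal.ofReal_le_iff_le_toReal (h1.trans_lt ENNReal.ofReal_lt_top).ne).1 h2
  rw [abs_le]; constructor <;> linarith

lemma fapIntTop_lt_top {P : MSet α → unitInterval} (hP : IsFAP P) {A : Set α}
    (hA : MeasurableSet A) (h0 : (P ⟨Aᶜ, hA.compl⟩ : ℝ) = 0) (h : α → ℝ)
    (C : ℝ) (hC : ∀ x ∈ A, |h x| ≤ C) :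
    fapIntTop P (fun x => ENNReal.ofReal |h x|) < ⊤ := by
  refine lt_of_le_of_lt (fapIntTop_bounds hP hA h0 (fun x => |h x|) (SimpleFunc.const α 0) C C hC
    ?_).1 ENNReal.ofReal_lt_top
  intro x hx
  simpa using hC x hx

lemma fapIntR_approx {P : MSet α → unitInterval} (hP : IsFAP P) {A : Set α}
    (hA : MeasurableSet A) (h0 : (P ⟨Aᶜ, hA.compl⟩ : ℝ) = 0) (h : α → ℝ) (s : SimpleFunc α ℝ)
    (ε C : ℝ) (hε : 0 ≤ ε) (hC : ∀ x ∈ A, |h x| ≤ C) (hs : ∀ x ∈ A, |h x - s x| ≤ ε) :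
    |fapIntR P h - simpleInt P s| ≤ 2 * ε := by
  let sp : SimpleFunc α ℝ := s.map (fun y => max y 0)
  let sn : SimpleFunc α ℝ := s.map (fun y => max (-y) 0)
  have hsp : s = sp - sn := by
    ext x
    simp only [sp, sn, SimpleFunc.coe_sub, Pi.sub_apply, SimpleFunc.map_apply]
    rcases le_total 0 (s x) with h | h <;> simp [h]
  have h1 := fapIntTop_approx hP hA h0 h sp ε C hε (fun x hx => (abs_le.1 (hC x hx)).2)
    (fun x hx => (abs_max_sub_max_le_abs _ _ _).trans (hs x hx)) (fun x => le_max_right _ _)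
  have h2 := fapIntTop_approx hP hA h0 (fun x => - h x) sn ε C hε
    (fun x hx => by have := (abs_le.1 (hC x hx)).1; linarith)
    (fun x hx => (abs_max_sub_max_le_abs _ _ _).trans (by
      rw [neg_sub_neg, abs_sub_comm]; exact hs x hx)) (fun x => le_max_right _ _)
  have h3 : simpleInt P s = simpleInt P sp - simpleInt P sn := by
    conv_lhs => rw [hsp]
    exact simpleInt_sub hP _ _
  rw [h3]
  unfold fapIntR
  rw [abs_le] at *
  constructor <;> linarith [h1.1, h1.2, h2.1, h2.2]

lemma exists_simple (h : α → ℝ) (hm : Measurable h) (A : Set α) (C : ℝ) (hC : ∀ x ∈ A, |h x| ≤ C)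
    (ε : ℝ) (hε : 0 < ε) : ∃ s : SimpleFunc α ℝ, ∀ x ∈ A, |h x - s x| ≤ ε := by
  let g : α → ℤ := fun x => ⌊max (-C) (min (h x) C) / ε⌋
  have hg : Measurable g :=
    Int.measurable_floor.comp
      ((measurable_const.max (hm.min measurable_const)).div_const ε)
  have hfin : (Set.range g).Finite := by
    refine (Set.finite_Icc ⌊-C / ε⌋ ⌊max (-C) C / ε⌋).subset ?_
    rintro _ ⟨x, rfl⟩
    constructor
    · exact Int.floor_mono (by gcongr; exact le_max_left _ _)
    · refine Int.floor_mono ?_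
      gcongr
      exact min_le_right _ _
  let s : SimpleFunc α ℤ := ⟨g, fun y => hg (measurableSet_singleton y), hfin⟩
  refine ⟨s.map (fun z : ℤ => ε * (z : ℝ)), fun x hx => ?_⟩
  have h1 := abs_le.1 (hC x hx)
  have h2 : max (-C) (min (h x) C) = h x := by
    rw [min_eq_left h1.2, max_eq_right h1.1]
  have h3 : (s.map (fun z : ℤ => ε * (z : ℝ))) x = ε * (⌊h x / ε⌋ : ℝ) := by
    change ε * ((⌊max (-C) (min (h x) C) / ε⌋ : ℤ) : ℝ) = _
    rw [h2]
  rw [h3]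
  have h4 := Int.floor_le (h x / ε)
  have h5 := Int.lt_floor_add_one (h x / ε)
  rw [le_div_iff₀ hε] at h4
  rw [div_lt_iff₀ hε] at h5
  rw [abs_le]; constructor <;> nlinarith

lemma fapIntR_zero_iff {P : MSet α → unitInterval} (hP : IsFAP P) {A : Set α}
    (hA : MeasurableSet A) (h0 : (P ⟨Aᶜ, hA.compl⟩ : ℝ) = 0) (h : α → ℝ) (hm : Measurable h)
    (C : ℝ) (hC : ∀ x ∈ A, |h x| ≤ C) :
    fapIntR P h = 0 ↔ ∀ s : SimpleFunc α ℝ, ∀ ε : ℝ, 0 ≤ ε → (∀ x ∈ A, |h x - s x| ≤ ε) →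
      |simpleInt P s| ≤ 2 * ε := by
  constructor
  · intro hz s ε hε hs
    have := fapIntR_approx hP hA h0 h s ε C hε hC hs
    rwa [hz, zero_sub, abs_neg] at this
  · intro H
    rw [← abs_nonpos_iff]
    refine le_of_forall_pos_le_add fun ε hε => ?_
    obtain ⟨s, hs⟩ := exists_simple h hm A C hC (ε / 4) (by positivity)
    have h1 := fapIntR_approx hP hA h0 h s (ε / 4) C (by positivity) hC hs
    have h2 := H s (ε / 4) (by positivity) hs
    rw [abs_le] at *
    constructor <;> linarith [h1.1, h1.2, h2.1, h2.2]

lemma continuous_ev (A : MSet α) : Continuous (fun P : MSet α → unitInterval => (P A : ℝ)) :=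
  continuous_subtype_val.comp (continuous_apply A)

lemma continuous_simpleInt (s : SimpleFunc α ℝ) :
    Continuous (fun P : MSet α → unitInterval => simpleInt P s) := by
  unfold simpleInt
  exact continuous_finset_sum _ fun y _ => continuous_const.mul (continuous_ev _)

noncomputable def mix (a b : ℝ) (ha : 0 ≤ a) (hb : 0 ≤ b) (hab : a + b = 1)
    (P Q : MSet α → unitInterval) : MSet α → unitInterval :=
  fun A => ⟨a * P A + b * Q A, (convex_Icc (0 : ℝ) 1) (P A).2 (Q A).2 ha hb hab⟩

lemma mix_apply (a b : ℝ) (ha : 0 ≤ a) (hb : 0 ≤ b) (hab : a + b = 1)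
    (P Q : MSet α → unitInterval) (A : MSet α) :
    (mix a b ha hb hab P Q A : ℝ) = a * P A + b * Q A := rfl

lemma simpleInt_mix (a b : ℝ) (ha : 0 ≤ a) (hb : 0 ≤ b) (hab : a + b = 1)
    (P Q : MSet α → unitInterval) (s : SimpleFunc α ℝ) :
    simpleInt (mix a b ha hb hab P Q) s = a * simpleInt P s + b * simpleInt Q s := by
  unfold simpleInt
  rw [Finset.mul_sum, Finset.mul_sum, ← Finset.sum_add_distrib]
  refine Finset.sum_congr rfl fun y _ => ?_
  rw [mix_apply]; ring

/-- Abstract class of f.a.p.'s annihilating a family of functions. -/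
def UU (Pstar : MSet α → unitInterval) (A : Set α) (H : Set (α → ℝ)) :
    Set (MSet α → unitInterval) :=
  {Q | IsFAP Q ∧ FapAC Q Pstar ∧ ∀ h ∈ H, ∀ s : SimpleFunc α ℝ, ∀ ε : ℝ, 0 ≤ ε →
    (∀ x ∈ A, |h x - s x| ≤ ε) → |simpleInt Q s| ≤ 2 * ε}

lemma isClosed_UU (Pstar : MSet α → unitInterval) (A : Set α) (H : Set (α → ℝ)) :
    IsClosed (UU Pstar A H) := by
  have e : UU Pstar A H = {Q | (Q ⟨Set.univ, MeasurableSet.univ⟩ : ℝ) = 1} ∩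
      (⋂ B : MSet α, ⋂ C : MSet α, ⋂ _ : Disjoint B.1 C.1,
        {Q | (Q ⟨B.1 ∪ C.1, B.2.union C.2⟩ : ℝ) = (Q B : ℝ) + (Q C : ℝ)}) ∩
      (⋂ B : MSet α, ⋂ _ : (Pstar B : ℝ) = 0, {Q | (Q B : ℝ) = 0}) ∩
      (⋂ h ∈ H, ⋂ s : SimpleFunc α ℝ, ⋂ ε : ℝ, ⋂ _ : 0 ≤ ε,
        ⋂ _ : ∀ x ∈ A, |h x - s x| ≤ ε, {Q | |simpleInt Q s| ≤ 2 * ε}) := by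
    ext Q
    simp only [UU, IsFAP, FapAC, Set.mem_inter_iff, Set.mem_iInter, Set.mem_setOf_eq, and_assoc]
  rw [e]
  refine IsClosed.inter (IsClosed.inter (IsClosed.inter ?_ ?_) ?_) ?_
  · exact isClosed_eq (continuous_ev _) continuous_const
  · exact isClosed_iInter fun B => isClosed_iInter fun C => isClosed_iInter fun _ =>
      isClosed_eq (continuous_ev _) ((continuous_ev _).add (continuous_ev _))
  · exact isClosed_iInter fun B => isClosed_iInter fun _ =>
      isClosed_eq (continuous_ev _) continuous_const
  · exact isClosed_iInter fun h => isClosed_iInter fun _ => isClosed_iInter fun s =>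
      isClosed_iInter fun ε => isClosed_iInter fun _ => isClosed_iInter fun _ =>
      isClosed_le (continuous_simpleInt s).abs continuous_const

lemma mix_mem_UU (Pstar : MSet α → unitInterval) (A : Set α) (H : Set (α → ℝ))
    (a b : ℝ) (ha : 0 ≤ a) (hb : 0 ≤ b) (hab : a + b = 1)
    (P Q : MSet α → unitInterval) (hP : P ∈ UU Pstar A H) (hQ : Q ∈ UU Pstar A H) :
    mix a b ha hb hab P Q ∈ UU Pstar A H := by
  refine ⟨⟨?_, ?_⟩, ?_, ?_⟩
  · rw [mix_apply, hP.1.1, hQ.1.1]; linarith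
  · intro B C hBC
    simp only [mix_apply]
    rw [hP.1.2 B C hBC, hQ.1.2 B C hBC]; ring
  · intro B hB
    rw [mix_apply, hP.2.1 B hB, hQ.2.1 B hB]; simp
  · intro h hh s ε hε hs
    rw [simpleInt_mix]
    have h1 := abs_le.1 (hP.2.2 h hh s ε hε hs)
    have h2 := abs_le.1 (hQ.2.2 h hh s ε hε hs)
    have hb' : b = 1 - a := by linarith
    subst hb'
    rw [abs_le]; constructor <;> nlinarith [h1.1, h1.2, h2.1, h2.2]

end helpers

section main
variable {n : ℕ}

lemma pi_meas (i : Fin n) {B : Set ℝ} (hB : MeasurableSet B) :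
    MeasurableSet ((fun ω : Fin n → ℝ => ω i) ⁻¹' B) := (measurable_pi_apply i) hB

/-- separation + compactness -/
lemma exists_of_dual (μ : Fin n → Measure ℝ) [∀ i, IsProbabilityMeasure (μ i)]
    (U : Set (MSet (Fin n → ℝ) → unitInterval)) (hcl : IsClosed U) (hfap : ∀ Q ∈ U, IsFAP Q)
    (hconv : ∀ a b (ha : 0 ≤ a) (hb : 0 ≤ b) (hab : a + b = 1), ∀ P ∈ U, ∀ Q ∈ U,
      mix a b ha hb hab P Q ∈ U) (hd : DualCond μ U) : (couplings μ ∩ U).Nonempty := by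
  classical
  let t : (Fin n × MSet ℝ) → Set (MSet (Fin n → ℝ) → unitInterval) := fun p =>
    {Q | (Q ⟨(fun ω => ω p.1) ⁻¹' p.2.1, pi_meas p.1 p.2.2⟩ : ℝ) = (μ p.1 p.2.1).toReal}
  suffices hne : (U ∩ ⋂ p, t p).Nonempty by
    obtain ⟨Q, hQ, hQt⟩ := hne
    refine ⟨Q, ⟨hfap Q hQ, fun i B hB => ?_⟩, hQ⟩
    exact Set.mem_iInter.1 hQt (i, ⟨B, hB⟩)
  refine hcl.isCompact.inter_iInter_nonempty t
    (fun p => isClosed_eq (continuous_ev _) continuous_const) fun F => ?_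
  let T : (MSet (Fin n → ℝ) → unitInterval) → (F → ℝ) := fun Q p =>
    (Q ⟨(fun ω => ω p.1.1) ⁻¹' p.1.2.1, pi_meas p.1.1 p.1.2.2⟩ : ℝ)
  let v : F → ℝ := fun p => (μ p.1.1 p.1.2.1).toReal
  have hT : Continuous T := continuous_pi fun p => continuous_ev _
  by_cases hv : v ∈ T '' U
  · obtain ⟨Q, hQ, hQv⟩ := hv
    refine ⟨Q, hQ, Set.mem_iInter₂.2 fun p hp => ?_⟩
    exact congrFun hQv ⟨p, hp⟩
  exfalso
  have hc : Convex ℝ (T '' U) := by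
    rintro _ ⟨P, hP, rfl⟩ _ ⟨Q, hQ, rfl⟩ a b ha hb hab
    exact ⟨mix a b ha hb hab P Q, hconv a b ha hb hab P hP Q hQ, by ext p; rfl⟩
  obtain ⟨φ, u, hu1, hu2⟩ := geometric_hahn_banach_point_closed hc
    (hcl.isCompact.image hT).isClosed hv
  let a : F → ℝ := fun p => φ (Pi.single p 1)
  have hφ : ∀ x, φ x = ∑ p, a p * x p := fun x => by
    have := LinearMap.pi_apply_eq_sum_univ (φ : (F → ℝ) →ₗ[ℝ] ℝ) x
    simp only [ContinuousLinearMap.coe_coe, smul_eq_mul] at this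
    rw [this]
    refine Finset.sum_congr rfl fun p _ => ?_
    rw [mul_comm]
    congr 2
    ext j
    simp [Pi.single_apply, eq_comm]
  let f : Fin n → ℝ → ℝ := fun i x =>
    ∑ p : F, if p.1.1 = i then p.1.2.1.indicator (fun _ => a p) x else 0
  have hfm : ∀ i, Measurable (f i) := fun i => by
    refine Finset.measurable_sum _ fun p _ => ?_
    split_ifs
    · exact measurable_const.indicator p.1.2.2
    · exact measurable_const
  have hterm : ∀ i (p : F) x,
      |if p.1.1 = i then p.1.2.1.indicator (fun _ => a p) x else 0| ≤ |a p| := fun i p x => by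
    split_ifs
    · by_cases hx : x ∈ p.1.2.1 <;> simp [hx]
    · simp
  have hfb : ∀ i x, |f i x| ≤ ∑ p, |a p| := fun i x =>
    (Finset.abs_sum_le_sum_abs _ _).trans (Finset.sum_le_sum fun p _ => hterm i p x)
  have hd' := hd f hfm (fun i => ⟨_, hfb i⟩)
  have hint : ∑ i, ∫ x, f i x ∂(μ i) = φ v := by
    have h1 : ∀ i, ∫ x, f i x ∂(μ i) =
        ∑ p : F, if p.1.1 = i then a p * v p else 0 := fun i => by
      rw [integral_finset_sum]
      · refine Finset.sum_congr rfl fun p _ => ?_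
        split_ifs with h
        · subst h
          rw [integral_indicator_const _ p.1.2.2]
          simp [v, mul_comm, Measure.real]
        · simp
      · intro p _
        split_ifs
        · exact (integrable_const _).indicator p.1.2.2
        · simp
    simp only [h1]
    rw [Finset.sum_comm, hφ]
    simp
  have hQ : ∀ Q ∈ U, fapInt Q (fun ω => ∑ i, f i (ω i)) = φ (T Q) := fun Q hQU => by
    let s : SimpleFunc (Fin n → ℝ) ℝ := ∑ p : F,
      SimpleFunc.piecewise _ (pi_meas p.1.1 p.1.2.2) (SimpleFunc.const _ (a p))
        (SimpleFunc.const _ 0)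
    have hs : ∀ ω, ∑ i, f i (ω i) = s ω := fun ω => by
      simp only [f, s]
      rw [Finset.sum_comm, sum_coe]
      refine Finset.sum_congr rfl fun p _ => ?_
      rw [Finset.sum_ite_eq]
      simp only [Finset.mem_univ, if_true]
      by_cases hx : ω p.1.1 ∈ p.1.2.1 <;> simp [hx, SimpleFunc.piecewise_apply]
    have h1 := fapInt_approx (hfap Q hQU) (fun ω => ∑ i, f i (ω i)) s 0
      (∑ i : Fin n, ∑ p, |a p|) (fun ω => (Finset.abs_sum_le_sum_abs _ _).trans
        (Finset.sum_le_sum fun i _ => hfb i (ω i))) (fun ω => by simp [hs ω])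
    have h2 : simpleInt Q s = φ (T Q) := by
      rw [simpleInt_sum (hfap Q hQU), hφ]
      exact Finset.sum_congr rfl fun p _ => simpleInt_ite (hfap Q hQU) _ _ _
    rw [← h2]
    exact sub_eq_zero.1 (abs_nonpos_iff.1 h1)
  rw [hint] at hd'
  have h3 : (u : EReal) ≤ ⨅ Q ∈ U, ((fapInt Q (fun ω => ∑ i, f i (ω i)) : ℝ) : EReal) := by
    refine le_iInf₂ fun Q hQU => ?_
    rw [hQ Q hQU]
    exact EReal.coe_le_coe_iff.2 (hu2 _ ⟨Q, hQU, rfl⟩).le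
  have h4 := EReal.coe_le_coe_iff.1 (h3.trans hd')
  linarith

lemma coupling_int (μ : Fin n → Measure ℝ) [∀ i, IsProbabilityMeasure (μ i)]
    (Q : MSet (Fin n → ℝ) → unitInterval) (hQ : Q ∈ couplings μ) (f : Fin n → ℝ → ℝ)
    (hf : ∀ i, Measurable (f i)) (hb : ∀ i, ∃ C, ∀ x, |f i x| ≤ C) :
    fapInt Q (fun ω => ∑ i, f i (ω i)) = ∑ i, ∫ x, f i x ∂(μ i) := by
  classical
  choose C hC using hb
  have key : ∀ ε : ℝ, 0 < ε →
      |fapInt Q (fun ω => ∑ i, f i (ω i)) - ∑ i, ∫ x, f i x ∂(μ i)| ≤ (2 * n) * ε := by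
    intro ε hε
    have hex : ∀ i, ∃ s : SimpleFunc ℝ ℝ, ∀ x, |f i x - s x| ≤ ε := fun i => by
      obtain ⟨s, hs⟩ := exists_simple (f i) (hf i) Set.univ (C i) (fun x _ => hC i x) ε hε
      exact ⟨s, fun x => hs x trivial⟩
    choose s hs using hex
    let S : Fin n → SimpleFunc (Fin n → ℝ) ℝ := fun i =>
      (s i).comp (fun ω => ω i) (measurable_pi_apply i)
    have h1 := fapInt_approx hQ.1 (fun ω => ∑ i, f i (ω i)) (∑ i, S i) (n * ε) (∑ i, C i)
      (fun ω => (Finset.abs_sum_le_sum_abs _ _).trans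
        (Finset.sum_le_sum fun i _ => hC i (ω i)))
      (fun ω => by
        rw [sum_coe, ← Finset.sum_sub_distrib]
        refine (Finset.abs_sum_le_sum_abs _ _).trans
          ((Finset.sum_le_sum fun i _ => hs i (ω i)).trans ?_)
        simp)
    have hsi : ∀ i, Integrable (s i) (μ i) := fun i => SimpleFunc.integrable_of_isFiniteMeasure _
    have hfi : ∀ i, Integrable (f i) (μ i) := fun i =>
      Integrable.of_bound (hf i).aestronglyMeasurable (C i)
        (Filter.Eventually.of_forall fun x => hC i x)
    have h2 : ∀ i, simpleInt Q (S i) = ∫ x, s i x ∂(μ i) := fun i => by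
      rw [SimpleFunc.integral_eq_sum _ (hsi i)]
      unfold simpleInt
      have hsub : (S i).range ⊆ (s i).range := SimpleFunc.range_comp_subset_range _ _
      have hterm : ∀ y, (Q ⟨(S i) ⁻¹' {y}, (S i).measurableSet_fiber y⟩ : ℝ) =
          (μ i).real ((s i) ⁻¹' {y}) := fun y =>
        hQ.2 i ((s i) ⁻¹' {y}) ((s i).measurableSet_fiber y)
      rw [Finset.sum_subset hsub]
      · refine Finset.sum_congr rfl fun y _ => ?_
        rw [hterm, smul_eq_mul, mul_comm]
      · intro y _ hy
        have he : (S i) ⁻¹' {y} = ∅ := SimpleFunc.preimage_eq_empty_iff _ _ |>.2 hy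
        have : (Q ⟨(S i) ⁻¹' {y}, (S i).measurableSet_fiber y⟩ : ℝ) = 0 := by
          simp only [he]
          exact fap_empty hQ.1
        rw [this, mul_zero]
    have h3 : |∑ i, simpleInt Q (S i) - ∑ i, ∫ x, f i x ∂(μ i)| ≤ n * ε := by
      rw [← Finset.sum_sub_distrib]
      refine (Finset.abs_sum_le_sum_abs _ _).trans
        ((Finset.sum_le_sum (g := fun _ => ε) fun i _ => ?_).trans (by simp))
      rw [h2, ← integral_sub (hsi i) (hfi i)]
      have := norm_integral_le_of_norm_le_const (μ := μ i) (f := fun x => s i x - f i x) (C := ε)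
        (Filter.Eventually.of_forall fun x => by
          rw [Real.norm_eq_abs, abs_sub_comm]; exact hs i x)
      simpa using this
    rw [simpleInt_sum hQ.1] at h1
    rw [abs_le] at *
    constructor <;> linarith [h1.1, h1.2, h3.1, h3.2]
  rw [← sub_eq_zero, ← abs_nonpos_iff]
  refine le_of_forall_pos_le_add fun δ hδ => ?_
  refine (key (δ / (2 * n + 1)) (by positivity)).trans ?_
  rw [zero_add, mul_div_assoc', div_le_iff₀ (by positivity)]
  nlinarith

/-- the family of test functions -/
def HH (hn : 0 < n) : Set ((Fin n → ℝ) → ℝ) :=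
  {h | h = (fun ω => ω ⟨0, hn⟩) ∨ ∃ i j : Fin n, (j : ℕ) = (i : ℕ) + 1 ∧
      ∃ g : (Fin n → ℝ) → ℝ, Measurable g ∧ (∃ C, ∀ x, |g x| ≤ C) ∧
        (∀ x y : Fin n → ℝ, (∀ k : Fin n, k ≤ i → x k = y k) → g x = g y) ∧
        h = fun ω => (ω j - ω i) * g ω}

lemma U_eq (hn : 0 < n) (Pstar : MSet (Fin n → ℝ) → unitInterval) (hPstar : IsFAP Pstar)
    (A : Set (Fin n → ℝ)) (hA : IsCompact A)
    (h1 : (Pstar ⟨A, hA.isClosed.measurableSet⟩ : ℝ) = 1) :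
    {Q | IsFAP Q ∧ FapAC Q Pstar ∧ IsMartFAP hn Q} = UU Pstar A (HH hn) := by
  have hAm := hA.isClosed.measurableSet
  obtain ⟨R, hR⟩ := hA.isBounded.exists_norm_le
  have hR' : ∀ i : Fin n, ∀ ω ∈ A, |ω i| ≤ R := fun i ω hω =>
    (norm_le_pi_norm ω i).trans (hR ω hω)
  have hm : ∀ h ∈ HH hn, Measurable h ∧ ∃ C, ∀ x ∈ A, |h x| ≤ C := by
    rintro h (rfl | ⟨i, j, -, g, hg, ⟨C, hC⟩, -, rfl⟩)
    · exact ⟨measurable_pi_apply _, R, hR' _⟩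
    · refine ⟨((measurable_pi_apply j).sub (measurable_pi_apply i)).mul hg, (R + R) * C,
        fun ω hω => ?_⟩
      rw [abs_mul]
      have h2 : |ω j - ω i| ≤ R + R := (abs_sub _ _).trans (add_le_add (hR' j ω hω) (hR' i ω hω))
      exact mul_le_mul h2 (hC ω) (abs_nonneg _) ((abs_nonneg _).trans h2)
  have hstar0 : (Pstar ⟨Aᶜ, hAm.compl⟩ : ℝ) = 0 := by
    have := fap_compl hPstar A hAm
    linarith
  ext Q
  refine and_congr_right fun hQ => and_congr_right fun hac => ?_
  have h0 : (Q ⟨Aᶜ, hAm.compl⟩ : ℝ) = 0 := hac _ hstar0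
  have hiff : (∀ h ∈ HH hn, fapIntR Q h = 0) ↔ ∀ h ∈ HH hn, ∀ s : SimpleFunc (Fin n → ℝ) ℝ,
      ∀ ε : ℝ, 0 ≤ ε → (∀ x ∈ A, |h x - s x| ≤ ε) → |simpleInt Q s| ≤ 2 * ε := by
    refine forall₂_congr fun h hh => ?_
    obtain ⟨hme, C, hC⟩ := hm h hh
    exact fapIntR_zero_iff hQ hAm h0 h hme C hC
  rw [← hiff]
  constructor
  · rintro ⟨-, hz, hg⟩ h (rfl | ⟨i, j, hij, g, hgm, hgb, hgd, rfl⟩)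
    · exact hz
    · exact hg i j hij g hgm hgb hgd
  · intro H
    refine ⟨fun i => fapIntTop_lt_top hQ hAm h0 _ R (hR' i), H _ (Or.inl rfl), ?_⟩
    intro i j hij g hgm hgb hgd
    exact H _ (Or.inr ⟨i, j, hij, g, hgm, hgb, hgd, rfl⟩)

end main


/-- on `Ω = ℝⁿ`, let `P* ∈ ℙ` give mass `1` to some compact set and let
`𝒰 = {Q ∈ ℙ : Q ≪ P* and (π_1,…,π_n) is a Q-martingale}`. Then `M ∩ 𝒰 ≠ ∅` iff
`Σᵢ μᵢ(fᵢ) ≥ inf_{Q ∈ 𝒰} Q(⊕ᵢ fᵢ)` for all bounded Borel `fᵢ : ℝ → ℝ`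
(with `inf ∅ = ∞`). -/
theorem nonempty_iff_dualCond_martingale
    {n : ℕ} (hn : 0 < n) (μ : Fin n → Measure ℝ) [∀ i, IsProbabilityMeasure (μ i)]
    (Pstar : MSet (Fin n → ℝ) → unitInterval) (hPstar : IsFAP Pstar)
    (hcomp : ∃ A : Set (Fin n → ℝ), ∃ hA : IsCompact A,
      (Pstar ⟨A, hA.isClosed.measurableSet⟩ : ℝ) = 1) :
    (couplings μ ∩ {Q | IsFAP Q ∧ FapAC Q Pstar ∧ IsMartFAP hn Q}).Nonempty ↔
      DualCond μ {Q | IsFAP Q ∧ FapAC Q Pstar ∧ IsMartFAP hn Q} := by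
  obtain ⟨A, hA, h1⟩ := hcomp
  constructor
  · rintro ⟨Q, hQM, hQU⟩ f hf hb
    rw [← coupling_int μ Q hQM f hf hb]
    exact iInf₂_le Q hQU
  · intro hd
    rw [U_eq hn Pstar hPstar A hA h1] at hd ⊢
    exact exists_of_dual μ _ (isClosed_UU _ _ _) (fun Q hQ => hQ.1)
      (fun a b ha hb hab P hP Q hQ => mix_mem_UU _ _ _ a b ha hb hab P Q hP hQ) hd

end FATransport
end

section
/- Let ℛ be the field on [0,1]² generated by the measurable rectangles A_1 × A_2 with A_1, A_2 ∈ ℬ([0,1]). Then T(A) = 1 whenever A ∈ ℛ and A ⊃ {(x,y) ∈ [0,1]² : x > y}. -/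
open MeasureTheory Set ENNReal

namespace FATransport

variable {α : Type*} [MeasurableSpace α]

/-- Lebesgue measure `m` on `ℬ([0,1])`. -/
noncomputable def mI : Measure unitInterval := volume

/-- The diagonal coupling `T ∈ Γ`, i.e. the image of `m` under `x ↦ (x,x)`. -/
noncomputable def TI : Measure (unitInterval × unitInterval) :=
  mI.map (fun x => (x, x))

/-- `P` has both marginals equal to Lebesgue measure `m` on `[0,1]`. -/
def HasLebesgueMarginals (P : MSet (unitInterval × unitInterval) → unitInterval) : Prop :=
  (∀ (B : Set unitInterval) (hB : MeasurableSet B),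
    (P ⟨Prod.fst ⁻¹' B, measurable_fst hB⟩ : ℝ) = (mI B).toReal) ∧
  (∀ (B : Set unitInterval) (hB : MeasurableSet B),
    (P ⟨Prod.snd ⁻¹' B, measurable_snd hB⟩ : ℝ) = (mI B).toReal)

/-- The set `{(x,y) ∈ [0,1]² : x > y}`. -/
def Sgt : Set (unitInterval × unitInterval) := {p | (p.2 : ℝ) < (p.1 : ℝ)}

/-- The set `{(x,y) ∈ [0,1]² : x < y}`. -/
def Slt : Set (unitInterval × unitInterval) := {p | (p.1 : ℝ) < (p.2 : ℝ)}

/-- The set `{(x,y) ∈ [0,1]² : x ≤ y}`. -/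
def Sle : Set (unitInterval × unitInterval) := {p | (p.1 : ℝ) ≤ (p.2 : ℝ)}

/-- The diagonal `{(x,y) ∈ [0,1]² : x = y}`. -/
def Sdiag : Set (unitInterval × unitInterval) := {p | (p.1 : ℝ) = (p.2 : ℝ)}

lemma measSgt : MeasurableSet Sgt :=
  measurableSet_lt (measurable_subtype_coe.comp measurable_snd)
    (measurable_subtype_coe.comp measurable_fst)

lemma measSlt : MeasurableSet Slt :=
  measurableSet_lt (measurable_subtype_coe.comp measurable_fst)
    (measurable_subtype_coe.comp measurable_snd)

lemma measSle : MeasurableSet Sle :=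
  measurableSet_le (measurable_subtype_coe.comp measurable_fst)
    (measurable_subtype_coe.comp measurable_snd)

lemma measSdiag : MeasurableSet Sdiag :=
  measurableSet_eq_fun (measurable_subtype_coe.comp measurable_fst)
    (measurable_subtype_coe.comp measurable_snd)

end FATransport

namespace FATransport

/-- The field (algebra of sets) generated by a collection `S` of subsets. -/
inductive genField {β : Type*} (S : Set (Set β)) : Set β → Prop
  | basic : ∀ s ∈ S, genField S s
  | empty : genField S ∅
  | compl : ∀ s, genField S s → genField S sᶜ
  | union : ∀ s t, genField S s → genField S t → genField S (s ∪ t)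

lemma genField_finite_factor (A : Set (unitInterval × unitInterval))
    (hA : genField {R : Set (unitInterval × unitInterval) |
      ∃ A₁ A₂ : Set unitInterval, MeasurableSet A₁ ∧ MeasurableSet A₂ ∧ R = A₁ ×ˢ A₂} A) :
    ∃ (F : Type) (_ : Finite F) (f : unitInterval → F), ∀ x x' y y', f x = f x' → f y = f y' →
      ((x, y) ∈ A ↔ (x', y') ∈ A) := by
  induction hA with
  | basic s hs =>
    obtain ⟨A₁, A₂, -, -, rfl⟩ := hs
    refine ⟨Prop × Prop, inferInstance, fun x => (x ∈ A₁, x ∈ A₂), ?_⟩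
    intro x x' y y' h1 h2
    simp only [Prod.mk.injEq] at h1 h2
    rw [Set.mem_prod, Set.mem_prod]
    simp only [h1.1, h2.2]
  | empty => exact ⟨Unit, inferInstance, fun _ => (), by simp⟩
  | compl s _ ih =>
    obtain ⟨F, hF, f, hf⟩ := ih
    exact ⟨F, hF, f, fun x x' y y' h1 h2 => not_congr (hf x x' y y' h1 h2)⟩
  | union s t _ _ ih1 ih2 =>
    obtain ⟨F, hF, f, hf⟩ := ih1
    obtain ⟨G, hG, g, hg⟩ := ih2
    refine ⟨F × G, inferInstance, fun x => (f x, g x), ?_⟩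
    intro x x' y y' h1 h2
    simp only [Prod.mk.injEq] at h1 h2
    exact or_congr (hf x x' y y' h1.1 h2.1) (hg x x' y y' h1.2 h2.2)

/-- if `ℛ` is the field on `[0,1]²` generated by the measurable
rectangles `A₁ × A₂` (`A₁, A₂ ∈ ℬ([0,1])`), then `T(A) = 1` whenever `A ∈ ℛ` and
`A ⊇ {(x,y) : x > y}`, where `T(A) = m {x : (x,x) ∈ A}`. -/
theorem T_eq_one_on_rect_field
    (A : Set (unitInterval × unitInterval))
    (hA : genField {R : Set (unitInterval × unitInterval) |
      ∃ A₁ A₂ : Set unitInterval, MeasurableSet A₁ ∧ MeasurableSet A₂ ∧ R = A₁ ×ˢ A₂} A)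
    (hsub : Sgt ⊆ A) :
    mI {x : unitInterval | (x, x) ∈ A} = 1 := by
  obtain ⟨F, hF, f, hf⟩ := genField_finite_factor A hA
  have key : ∀ x y : unitInterval, y < x → f x = f y → (x, x) ∈ A := fun x y hlt he =>
    (hf x x x y rfl he).2 (hsub (show (y : ℝ) < (x : ℝ) from hlt))
  have hinj : Set.InjOn f {x : unitInterval | (x, x) ∈ A}ᶜ := by
    intro x hx y hy he
    rcases lt_trichotomy x y with h | h | h
    · exact absurd (key y x h he.symm) hy
    · exact h
    · exact absurd (key x y h he) hx
  have hfin : ({x : unitInterval | (x, x) ∈ A}ᶜ).Finite :=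
    Set.Finite.of_finite_image (Set.toFinite _) hinj
  have h0 : (volume : Measure unitInterval) ({x : unitInterval | (x, x) ∈ A}ᶜ) = 0 :=
    hfin.measure_zero _
  have hm : MeasurableSet {x : unitInterval | (x, x) ∈ A} := by
    simpa using hfin.measurableSet.compl
  rw [mI]
  exact (prob_compl_eq_zero_iff hm).1 h0

end FATransport
end

section
/- There exists a finitely additive probability P on ℬ([0,1]²) such that both marginals of P are Lebesgue measure m (i.e. P(π_1 ∈ B) = P(π_2 ∈ B) = m(B) for all B ∈ ℬ([0,1])) and P({(x,y) : x > y}) = 1; similarly, there exists a finitely additive probability P̃ with both marginals equal to m and P̃({(x,y) : x < y}) = 1. -/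
open MeasureTheory Set ENNReal

namespace FATransport


noncomputable def sh (n : ℕ) (x : unitInterval) : unitInterval :=
  ⟨max 0 ((x : ℝ) - 1 / ((n : ℝ) + 1)), le_max_left _ _, max_le zero_le_one (by
    have : (0 : ℝ) < 1 / ((n : ℝ) + 1) := by positivity
    linarith [x.2.2])⟩

lemma measurable_sh (n : ℕ) : Measurable (sh n) := by
  unfold sh
  apply Measurable.subtype_mk
  fun_prop

lemma measurable_gr (n : ℕ) : Measurable (fun x => (x, sh n x)) :=
  measurable_id.prodMk (measurable_sh n)

instance instProbmI : IsProbabilityMeasure mI := by unfold mI; infer_instance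

lemma mI_le (n : ℕ) (B : Set unitInterval) (hB : MeasurableSet B) :
    mI.real B ≤ mI.real (sh n ⁻¹' B) + 1 / ((n : ℝ) + 1) := by
  set e : ℝ := 1 / ((n : ℝ) + 1) with he
  have hpos : 0 < e := by positivity
  have key : ∀ C : Set unitInterval, mI C = volume ((↑) '' C : Set ℝ) := fun C =>
    comap_subtype_coe_apply (s := Set.Icc (0 : ℝ) 1) measurableSet_Icc volume C
  have hsub : ((↑) '' B : Set ℝ) ⊆
      ((fun x => x + e) ⁻¹' ((↑) '' (sh n ⁻¹' B) : Set ℝ)) ∪ Set.Ioc (1 - e) 1 := by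
    rintro _ ⟨y, hy, rfl⟩
    by_cases h : (y : ℝ) ≤ 1 - e
    · left
      refine ⟨⟨y + e, by linarith [y.2.1], by linarith⟩, ?_, rfl⟩
      have : sh n ⟨y + e, by linarith [y.2.1], by linarith⟩ = y := by
        apply Subtype.ext
        simp only [sh, ← he]
        rw [add_sub_cancel_right, max_eq_right y.2.1]
      rw [Set.mem_preimage, this]; exact hy
    · right; exact ⟨not_le.1 h, y.2.2⟩
  have h1 : mI B ≤ mI (sh n ⁻¹' B) + ENNReal.ofReal e := by
    rw [key, key]
    refine (measure_mono hsub).trans ((measure_union_le _ _).trans ?_)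
    rw [measure_preimage_add_right, Real.volume_Ioc]
    simp
  have h2 := ENNReal.toReal_mono (by finiteness) h1
  rw [ENNReal.toReal_add (by finiteness) (by finiteness), ENNReal.toReal_ofReal hpos.le] at h2
  exact h2

lemma abs_le (n : ℕ) (B : Set unitInterval) (hB : MeasurableSet B) :
    |mI.real (sh n ⁻¹' B) - mI.real B| ≤ 1 / ((n : ℝ) + 1) := by
  have h1 := mI_le n B hB
  have h2 := mI_le n Bᶜ hB.compl
  rw [Set.preimage_compl, probReal_compl_eq_one_sub hB,
    probReal_compl_eq_one_sub (measurable_sh n hB)] at h2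
  rw [_root_.abs_le]; constructor <;> linarith

noncomputable def Pn (A : MSet (unitInterval × unitInterval)) (n : ℕ) : unitInterval :=
  ⟨mI.real ((fun x => (x, sh n x)) ⁻¹' A.1), measureReal_nonneg, measureReal_le_one⟩

open Filter Topology

noncomputable def PL (A : MSet (unitInterval × unitInterval)) : unitInterval :=
  (Ultrafilter.map (Pn A) (hyperfilter ℕ)).lim

lemma PL_tendsto (A : MSet (unitInterval × unitInterval)) :
    Tendsto (fun n => (Pn A n : ℝ)) (hyperfilter ℕ : Filter ℕ) (𝓝 (PL A : ℝ)) :=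
  (continuous_subtype_val.tendsto _).comp
    (Ultrafilter.le_nhds_lim (Ultrafilter.map (Pn A) (hyperfilter ℕ)))

lemma PL_eq {A : MSet (unitInterval × unitInterval)} {c : ℝ}
    (h : Tendsto (fun n => (Pn A n : ℝ)) atTop (𝓝 c)) : (PL A : ℝ) = c :=
  tendsto_nhds_unique (PL_tendsto A) (h.mono_left Nat.hyperfilter_le_atTop)

lemma PL_const {A : MSet (unitInterval × unitInterval)} {c : ℝ}
    (h : ∀ n, (Pn A n : ℝ) = c) : (PL A : ℝ) = c :=
  PL_eq (by simp only [h]; exact tendsto_const_nhds)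

lemma PL_fap : IsFAP PL := by
  refine ⟨PL_const fun n => by simp [Pn], fun A B hAB => ?_⟩
  refine tendsto_nhds_unique (PL_tendsto _) (((PL_tendsto A).add (PL_tendsto B)).congr fun n => ?_)
  simp only [Pn, Set.preimage_union]
  rw [measureReal_union (hAB.preimage _) (measurable_gr n B.2)]

lemma PL_marg : HasLebesgueMarginals PL := by
  refine ⟨fun B hB => PL_const fun n => rfl, fun B hB => PL_eq ?_⟩
  rw [tendsto_iff_dist_tendsto_zero]
  exact squeeze_zero (fun _ => dist_nonneg) (fun n => abs_le n B hB)
    tendsto_one_div_add_atTop_nhds_zero_nat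

lemma PL_gt : (PL ⟨Sgt, measSgt⟩ : ℝ) = 1 := by
  refine PL_const fun n => ?_
  have h : (fun x => (x, sh n x)) ⁻¹' Sgt = ({0} : Set unitInterval)ᶜ := by
    ext x
    have : (0 : ℝ) < 1 / ((n : ℝ) + 1) := by positivity
    simp only [Sgt, sh, Set.mem_preimage, Set.mem_setOf_eq, max_lt_iff, Set.mem_compl_iff,
      Set.mem_singleton_iff]
    constructor
    · rintro ⟨h, -⟩ rfl
      simp at h
    · intro h
      exact ⟨unitInterval.pos_iff_ne_zero.2 h, by linarith⟩
  simp only [Pn, h]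
  rw [probReal_compl_eq_one_sub (measurableSet_singleton _)]
  have : mI {(0 : unitInterval)} = 0 := by unfold mI; exact measure_singleton _
  simp [measureReal_def, this]

/-- there are finitely additive probabilities `P` and `P̃` on
`ℬ([0,1]²)`, both with both marginals equal to Lebesgue measure `m`, such that
`P({x > y}) = 1` and `P̃({x < y}) = 1`. -/
theorem exists_fap_strictly_below_and_above_diagonal :
    (∃ P : MSet (unitInterval × unitInterval) → unitInterval,
      IsFAP P ∧ HasLebesgueMarginals P ∧ (P ⟨Sgt, measSgt⟩ : ℝ) = 1) ∧
    (∃ Pt : MSet (unitInterval × unitInterval) → unitInterval,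
      IsFAP Pt ∧ HasLebesgueMarginals Pt ∧ (Pt ⟨Slt, measSlt⟩ : ℝ) = 1) := by
  refine ⟨⟨PL, PL_fap, PL_marg, PL_gt⟩,
    fun A => PL ⟨Prod.swap ⁻¹' A.1, measurable_swap A.2⟩, ⟨PL_fap.1, fun A B h => ?_⟩,
    ⟨fun B hB => PL_marg.2 B hB, fun B hB => PL_marg.1 B hB⟩, PL_gt⟩
  exact PL_fap.2 ⟨Prod.swap ⁻¹' A.1, measurable_swap A.2⟩
    ⟨Prod.swap ⁻¹' B.1, measurable_swap B.2⟩ (h.preimage _)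

end FATransport
end

section
/- Let c = 1(π_1 ≤ π_2) on [0,1]². Then Q(c) > 0 for every σ-additive probability measure Q on ℬ([0,1]²) with both marginals equal to Lebesgue measure m, while inf_{Q ∈ Γ} Q(c) = 0; hence the infimum of Q(c) over σ-additive couplings is not attained. In contrast, inf_{Q ∈ M} Q(c) = 0 is attained by some finitely additive P ∈ M, namely any P ∈ M with P(π_1 > π_2) = 1. -/
open MeasureTheory Set ENNReal

namespace FATransport

open Filter Topology

noncomputable def XX (t : UnitAddCircle) : unitInterval :=
  ⟨AddCircle.equivIoc (1:ℝ) 0 t, (AddCircle.equivIoc (1:ℝ) 0 t).2.1.le,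
    (AddCircle.equivIoc (1:ℝ) 0 t).2.2.trans (by simp)⟩

lemma XX_meas : Measurable XX :=
  (measurable_subtype_coe.comp (AddCircle.measurableEquivIoc (1:ℝ) 0).measurable).subtype_mk

lemma XX_map : (volume : Measure UnitAddCircle).map XX = mI := by
  have hemb : MeasurableEmbedding ((↑) : unitInterval → ℝ) :=
    MeasurableEmbedding.subtype_coe measurableSet_Icc
  have h : ((volume : Measure UnitAddCircle).map XX).map ((↑) : unitInterval → ℝ)
      = mI.map ((↑) : unitInterval → ℝ) := by
    rw [Measure.map_map measurable_subtype_coe XX_meas]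
    have h1 := (measurePreserving_subtype_coe (μa := (volume : Measure ℝ))
      (measurableSet_Ioc (a := (0:ℝ)) (b := 0 + 1))).comp
      (AddCircle.measurePreserving_equivIoc (T := (1:ℝ)) (a := 0))
    have h2 := unitInterval.measurePreserving_coe.map_eq
    rw [mI, h2]
    refine h1.map_eq.trans ?_
    rw [zero_add]
    exact restrict_Ioc_eq_restrict_Icc
  rw [← hemb.comap_map ((volume : Measure UnitAddCircle).map XX), h, hemb.comap_map]

lemma XX_sub {e : ℝ} (he : 0 < e) {t : UnitAddCircle} (h : e < XX t) :
    XX (t - (e : UnitAddCircle)) < XX t := by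
  set r : ℝ := (XX t : ℝ) with hr
  have ht : ((r : ℝ) : UnitAddCircle) = t := AddCircle.coe_equivIoc (p := (1:ℝ)) (a := 0)
  have hr1 : r ≤ 1 := (XX t).2.2
  have h3 : ((XX (t - (e : UnitAddCircle)) : unitInterval) : ℝ) = r - e := by
    rw [← ht, ← AddCircle.coe_sub]
    exact AddCircle.equivIoc_coe_of_mem (p := (1:ℝ)) (a := 0)
      ⟨by linarith, by linarith⟩
  rw [← Subtype.coe_lt_coe, h3]
  linarith

noncomputable def QQ (e : ℝ) : Measure (unitInterval × unitInterval) :=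
  (volume : Measure UnitAddCircle).map (fun t => (XX t, XX (t - (e : UnitAddCircle))))

lemma QQ_meas (e : ℝ) :
    Measurable (fun t : UnitAddCircle => (XX t, XX (t - (e : UnitAddCircle)))) :=
  XX_meas.prodMk (XX_meas.comp (measurable_id.sub_const _))

lemma QQ_fst (e : ℝ) : (QQ e).map Prod.fst = mI := by
  rw [QQ, Measure.map_map measurable_fst (QQ_meas e)]
  exact XX_map

lemma QQ_snd (e : ℝ) : (QQ e).map Prod.snd = mI := by
  rw [QQ, Measure.map_map measurable_snd (QQ_meas e)]
  have h : Measurable (fun t : UnitAddCircle => t - (e : UnitAddCircle)) :=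
    measurable_id.sub_const _
  have := Measure.map_map (μ := (volume : Measure UnitAddCircle)) XX_meas h
  rw [(measurePreserving_sub_right volume (e : UnitAddCircle)).map_eq, XX_map] at this
  exact this.symm

lemma QQ_prob (e : ℝ) : IsProbabilityMeasure (QQ e) := by
  have : IsProbabilityMeasure (volume : Measure UnitAddCircle) := ⟨UnitAddCircle.measure_univ⟩
  exact Measure.isProbabilityMeasure_map (QQ_meas e).aemeasurable

lemma QQ_Sle {e : ℝ} (he : 0 < e) (he1 : e ≤ 1) : QQ e Sle ≤ ENNReal.ofReal e := by
  have h1 : mI (Iic (⟨e, he.le, he1⟩ : unitInterval)) = ENNReal.ofReal e :=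
    unitInterval.volume_Iic _
  rw [← h1, ← XX_map, Measure.map_apply XX_meas measurableSet_Iic, QQ,
    Measure.map_apply (QQ_meas e) measSle]
  refine measure_mono fun t ht => ?_
  by_contra hc
  have hc' : e < XX t := by
    have := not_le.1 (show ¬ XX t ≤ ⟨e, he.le, he1⟩ from hc)
    exact this
  exact absurd (XX_sub he hc') (not_lt.2 ht)

lemma pos_Sle (Q : Measure (unitInterval × unitInterval)) (hQ : IsProbabilityMeasure Q)
    (h1 : Q.map Prod.fst = mI) (h2 : Q.map Prod.snd = mI) : 0 < Q Sle := by
  rw [pos_iff_ne_zero]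
  intro h0
  have hb : ∀ f : unitInterval × unitInterval → unitInterval, Measurable f →
      Integrable (fun p => (f p : ℝ)) Q := fun f hf =>
    Integrable.of_bound (measurable_subtype_coe.comp hf).aestronglyMeasurable 1
      (Eventually.of_forall fun p => by
        rw [Real.norm_eq_abs, abs_of_nonneg (f p).2.1]; exact (f p).2.2)
  have i1 : ∫ p, (p.1 : ℝ) ∂Q = ∫ x, (x : ℝ) ∂mI := by
    rw [← h1, integral_map measurable_fst.aemeasurable
      measurable_subtype_coe.aestronglyMeasurable]
  have i2 : ∫ p, (p.2 : ℝ) ∂Q = ∫ x, (x : ℝ) ∂mI := by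
    rw [← h2, integral_map measurable_snd.aemeasurable
      measurable_subtype_coe.aestronglyMeasurable]
  have hae : ∀ᵐ p ∂Q, (p.2 : ℝ) < p.1 := by
    rw [ae_iff]
    simpa [Sle, not_lt] using h0
  have hI : ∫ p, ((p.1 : ℝ) - p.2) ∂Q = 0 := by
    rw [integral_sub (hb _ measurable_fst) (hb _ measurable_snd), i1, i2, sub_self]
  have hI := (integral_eq_zero_iff_of_nonneg_ae (f := fun p => (p.1 : ℝ) - p.2) (hae.mono fun p hp => by
    have := sub_pos.2 hp
    exact this.le) ((hb _ measurable_fst).sub (hb _ measurable_snd))).1 hI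
  have hf : ∀ᵐ p ∂Q, False := by
    filter_upwards [hae, hI] with p hp hp'
    have : (p.1 : ℝ) - p.2 = 0 := hp'
    linarith
  rw [eventually_false_iff_eq_bot, ae_eq_bot] at hf
  exact IsProbabilityMeasure.ne_zero Q hf

lemma Sle_compl : Sle = Sgtᶜ := by
  ext p
  simp [Sle, Sgt]

lemma exists_FAP : ∃ P : MSet (unitInterval × unitInterval) → unitInterval,
      IsFAP P ∧ HasLebesgueMarginals P ∧ (P ⟨Sgt, measSgt⟩ : ℝ) = 1 := by
  have := QQ_prob
  let U : Ultrafilter ℕ := hyperfilter ℕ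
  let q : ℕ → MSet (unitInterval × unitInterval) → unitInterval := fun n A =>
    ⟨(QQ (1 / ((n : ℝ) + 1))).real A.1, measureReal_nonneg, measureReal_le_one⟩
  obtain ⟨P, -, hP⟩ := isCompact_univ.ultrafilter_le_nhds (U.map q) (by simp)
  have hP' : Tendsto q U (𝓝 P) := hP
  have hA : ∀ A : MSet (unitInterval × unitInterval),
      Tendsto (fun n : ℕ => (QQ (1 / ((n : ℝ) + 1))).real A.1) U (𝓝 (P A : ℝ)) := fun A =>
    (continuous_subtype_val.tendsto _).comp (tendsto_pi_nhds.1 hP' A)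
  have hU : (U : Filter ℕ) ≤ atTop := by
    rw [← Nat.cofinite_eq_atTop]; exact hyperfilter_le_cofinite
  refine ⟨P, ⟨?_, ?_⟩, ⟨?_, ?_⟩, ?_⟩
  · refine tendsto_nhds_unique (hA _) ?_
    simp
  · intro A B hAB
    refine tendsto_nhds_unique (hA _) (((hA A).add (hA B)).congr fun n => ?_)
    exact (measureReal_union hAB B.2).symm
  · intro B hB
    refine tendsto_nhds_unique (hA _) (tendsto_const_nhds.congr fun n => ?_)
    rw [← QQ_fst (1 / ((n : ℝ) + 1)), Measure.map_apply measurable_fst hB]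
    rfl
  · intro B hB
    refine tendsto_nhds_unique (hA _) (tendsto_const_nhds.congr fun n => ?_)
    rw [← QQ_snd (1 / ((n : ℝ) + 1)), Measure.map_apply measurable_snd hB]
    rfl
  · refine tendsto_nhds_unique (hA _) ?_
    have h1 : Tendsto (fun n : ℕ => 1 - 1 / ((n : ℝ) + 1)) U (𝓝 1) := by
      have := (tendsto_one_div_add_atTop_nhds_zero_nat (𝕜 := ℝ)).mono_left hU
      simpa using this.const_sub 1
    refine tendsto_of_tendsto_of_tendsto_of_le_of_le h1 tendsto_const_nhds
      (fun n => ?_) (fun n => measureReal_le_one)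
    have hn : (0:ℝ) < 1 / ((n : ℝ) + 1) := by positivity
    have hn1 : 1 / ((n : ℝ) + 1) ≤ 1 := by
      rw [div_le_one (by positivity)]; linarith [(Nat.cast_nonneg n : (0:ℝ) ≤ n)]
    have h2 : (QQ (1 / ((n : ℝ) + 1))).real Sle ≤ 1 / ((n : ℝ) + 1) :=
      ENNReal.toReal_le_of_le_ofReal hn.le (QQ_Sle hn hn1)
    rw [Sle_compl, probReal_compl_eq_one_sub measSgt] at h2
    show 1 - 1 / ((n : ℝ) + 1) ≤ (QQ (1 / ((n : ℝ) + 1))).real Sgt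
    linarith

/-- for `c = 1(π₁ ≤ π₂)` (so that `Q(c) = Q{π₁ ≤ π₂}`):
every σ-additive coupling `Q ∈ Γ` has `Q(c) > 0`, yet `inf_{Q ∈ Γ} Q(c) = 0`, so the
infimum over `Γ` is not attained; in contrast, any finitely additive `P ∈ M` with
`P(π₁ > π₂) = 1` satisfies `P(c) = 0` and minimizes `Q(c)` over `M`, so the infimum
over `M` equals `0` and is attained. -/
theorem indicator_le_inf_not_attained_sigma_additive :
    (∀ Q : Measure (unitInterval × unitInterval), IsProbabilityMeasure Q →
      Q.map Prod.fst = mI → Q.map Prod.snd = mI → 0 < Q Sle) ∧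
    ((⨅ Q : {Q : Measure (unitInterval × unitInterval) // IsProbabilityMeasure Q ∧
        Q.map Prod.fst = mI ∧ Q.map Prod.snd = mI}, Q.1 Sle) = 0) ∧
    (¬ ∃ Q : Measure (unitInterval × unitInterval),
      (IsProbabilityMeasure Q ∧ Q.map Prod.fst = mI ∧ Q.map Prod.snd = mI) ∧
        Q Sle = 0) ∧
    (∃ P : MSet (unitInterval × unitInterval) → unitInterval,
      IsFAP P ∧ HasLebesgueMarginals P ∧ (P ⟨Sgt, measSgt⟩ : ℝ) = 1) ∧
    (∀ P : MSet (unitInterval × unitInterval) → unitInterval,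
      IsFAP P → HasLebesgueMarginals P → (P ⟨Sgt, measSgt⟩ : ℝ) = 1 →
        (P ⟨Sle, measSle⟩ : ℝ) = 0 ∧
        ∀ Q : MSet (unitInterval × unitInterval) → unitInterval,
          IsFAP Q → HasLebesgueMarginals Q →
            (P ⟨Sle, measSle⟩ : ℝ) ≤ (Q ⟨Sle, measSle⟩ : ℝ)) := by
  refine ⟨pos_Sle, ?_, ?_, exists_FAP, ?_⟩
  · refine le_antisymm ?_ zero_le
    refine ENNReal.le_of_forall_pos_le_add fun e he _ => ?_
    rw [zero_add]
    have h0 : (0:ℝ) < min (e : ℝ) 1 := lt_min (by exact_mod_cast he) one_pos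
    refine (iInf_le _ ⟨QQ (min (e : ℝ) 1), QQ_prob _, QQ_fst _, QQ_snd _⟩).trans ?_
    refine (QQ_Sle h0 (min_le_right _ _)).trans ?_
    refine (ENNReal.ofReal_le_ofReal (min_le_left _ _)).trans ?_
    simp
  · rintro ⟨Q, ⟨hQ, h1, h2⟩, h0⟩
    exact (pos_Sle Q hQ h1 h2).ne' h0
  · intro P hP _ h1
    have h : (P ⟨Sle, measSle⟩ : ℝ) = 0 := by
      have h2 := hP.2 ⟨Sgt, measSgt⟩ ⟨Sle, measSle⟩ (by
        show Disjoint Sgt Sle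
        rw [Sle_compl]; exact disjoint_compl_right)
      have h3 : (⟨Sgt ∪ Sle, measSgt.union measSle⟩ : MSet (unitInterval × unitInterval))
          = ⟨Set.univ, MeasurableSet.univ⟩ := Subtype.ext (by
        show Sgt ∪ Sle = Set.univ
        rw [Sle_compl, union_compl_self])
      have h4 := hP.1
      rw [← h3] at h4
      have h5 := h4.symm.trans h2
      linarith
    refine ⟨h, fun Q _ _ => ?_⟩
    rw [h]
    exact (Q _).2.1

end FATransport
end
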